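/- Let T be a normal, steep rank-one transformation, and suppose the sequence of cuts (r_n) is nondecreasing with sup_n r_n = ∞. Then T is zero-type: μ(A ∩ T^n A) → 0 as n → ∞ for every measurable set A of finite measure. -/

import Mathlib

open MeasureTheory Filter Set Pointwise

/-- A rank-one cutting-and-stacking transformation of a subset `X ⊆ ℝ` (with Lebesgue
measure), given by columns `C n` consisting of `h n` levels (open intervals) of width `w n`,
with `pos n j` the left endpoint of the level of height `j` in column `C n`; column `C (n+1)`
is obtained from `C n` by cutting into `r n ≥ 2` subcolumns of equal width, adding `s n k`
spacers above the `k`-th subcolumn, and stacking. -/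
structure RankOne where
  X : Set ℝ
  T : ℝ ≃ᵐ ℝ
  r : ℕ → ℕ
  s : ℕ → ℕ → ℕ
  h : ℕ → ℕ
  w : ℕ → ℝ
  pos : ℕ → ℕ → ℝ
  hr : ∀ n, 2 ≤ r n
  h0 : h 0 = 1
  w0 : w 0 = 1
  pos0 : pos 0 0 = 0
  hrec : ∀ n, h (n + 1) = ∑ k ∈ Finset.range (r n), (h n + s n k)
  wrec : ∀ n, w (n + 1) = w n / (r n : ℝ)
  hX : X = ⋃ n, ⋃ j < h n, Set.Ioo (pos n j) (pos n j + w n)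
  disj : ∀ n, ∀ j < h n, ∀ j' < h n, j ≠ j' →
    Disjoint (Set.Ioo (pos n j) (pos n j + w n)) (Set.Ioo (pos n j') (pos n j' + w n))
  stack : ∀ n, ∀ j < h n, ∀ k < r n,
    pos (n + 1) ((∑ i ∈ Finset.range k, (h n + s n i)) + j) = pos n j + (k : ℝ) * w (n + 1)
  Tmap : ∀ n j, j + 1 < h n → ∀ x ∈ Set.Ioo (pos n j) (pos n j + w n),
    T x = x + (pos n (j + 1) - pos n j)
  Tbij : Set.BijOn (⇑T) X X
  Tpres : MeasurePreserving (⇑T) (volume.restrict X) (volume.restrict X)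

namespace RankOne

/-- The level of height `j` in column `C n`. -/
def lvl (S : RankOne) (n j : ℕ) : Set ℝ := Set.Ioo (S.pos n j) (S.pos n j + S.w n)

/-- The measure on the space: Lebesgue measure restricted to `X`. -/
noncomputable def μ (S : RankOne) : Measure ℝ := volume.restrict S.X

/-- The intrinsic weight sequence `u n F = μ(F ∩ TⁿF) / μ(F)²`. -/
noncomputable def u (S : RankOne) (F : Set ℝ) (n : ℕ) : ℝ :=
  (S.μ (F ∩ (⇑S.T)^[n] '' F)).toReal / (S.μ F).toReal ^ 2

/-- `a n F = ∑_{k<n} u k F`. -/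
noncomputable def a (S : RankOne) (F : Set ℝ) (n : ℕ) : ℝ :=
  ∑ k ∈ Finset.range n, S.u F k

/-- `T` is normal if spacers are added above the rightmost subcolumn infinitely often. -/
def Normal (S : RankOne) : Prop := ∀ m, ∃ n, m ≤ n ∧ 0 < S.s n (S.r n - 1)

/-- `T` grows exponentially: `2 s_{n, r_n - 1} ≥ h_{n+1}` for every `n`. -/
def ExpGrowing (S : RankOne) : Prop := ∀ n, S.h (n + 1) ≤ 2 * S.s n (S.r n - 1)

/-- `T` has a bounded number of cuts: `sup r_n < ∞`. -/
def BoundedCuts (S : RankOne) : Prop := ∃ c, ∀ n, S.r n ≤ c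

/-- `H n = {0} ∪ {∑_{k≤i} (h n + s n k) : 0 ≤ i < r n - 1}`. -/
def Hset (S : RankOne) (n : ℕ) : Finset ℕ :=
  insert 0 ((Finset.range (S.r n - 1)).image fun i => ∑ k ∈ Finset.range (i + 1), (S.h n + S.s n k))

/-- The set of heights in column `C N` of the descendants of the level of height `p`
in column `C j`: `D(J, N) = p + H j ⊕ H (j+1) ⊕ ⋯ ⊕ H (N-1)`. -/
def desc (S : RankOne) (j p : ℕ) : ℕ → Finset ℕ
  | 0 => {p}
  | N + 1 => if N < j then {p} else desc S j p N + S.Hset N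

/-- `M m`: the maximal height of a descendant of the unit interval `I` in column `C m`. -/
def M (S : RankOne) (m : ℕ) : ℕ := (S.desc 0 0 m).sup id

/-- The ergodic sum `S_n(1_F)(x) = ∑_{k<n} 1_F(T^k x)`. -/
noncomputable def birkhoff (S : RankOne) (F : Set ℝ) (n : ℕ) (x : ℝ) : ℝ :=
  ∑ k ∈ Finset.range n, Set.indicator F (fun _ => (1 : ℝ)) ((⇑S.T)^[k] x)

/-- `T` is rationally weakly mixing on `F`. -/
def RWMOn (S : RankOne) (F : Set ℝ) : Prop :=
  MeasurableSet F ∧ 0 < S.μ F ∧ S.μ F ≠ ⊤ ∧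
  ∀ A B : Set ℝ, MeasurableSet A → A ⊆ F → MeasurableSet B → B ⊆ F →
    Tendsto (fun n => (S.a F n)⁻¹ *
      ∑ k ∈ Finset.range n,
        |(S.μ (A ∩ (⇑S.T)^[k] '' B)).toReal - (S.μ A).toReal * (S.μ B).toReal * S.u F k|)
      atTop (nhds 0)

/-- `T` is rationally weakly mixing. -/
def RWM (S : RankOne) : Prop := ∃ F, S.RWMOn F

/-- `T` is rationally ergodic: some set `F` of positive finite measure satisfies a
Renyi inequality. -/
def RatErgodic (S : RankOne) : Prop :=
  ∃ (F : Set ℝ) (c : ℝ), MeasurableSet F ∧ 0 < S.μ F ∧ S.μ F ≠ ⊤ ∧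
    ∀ n, ∫ x in F, (S.birkhoff F n x) ^ 2 ∂S.μ ≤ c * (∫ x in F, S.birkhoff F n x ∂S.μ) ^ 2

/-- `T` is spectrally weakly mixing: every bounded measurable eigenfunction is a.e. constant. -/
def SpecWM (S : RankOne) : Prop :=
  ∀ (f : ℝ → ℂ) (z : ℂ), Measurable f → (∃ C, ∀ᵐ x ∂S.μ, ‖f x‖ ≤ C) →
    (∀ᵐ x ∂S.μ, f (S.T x) = z * f x) → ∃ c : ℂ, ∀ᵐ x ∂S.μ, f x = c

/-- `T` is zero-type: `μ(A ∩ TⁿA) → 0` for all `A` of finite measure. -/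
def ZeroType (S : RankOne) : Prop :=
  ∀ A : Set ℝ, MeasurableSet A → S.μ A ≠ ⊤ →
    Tendsto (fun n => S.μ (A ∩ (⇑S.T)^[n] '' A)) atTop (nhds 0)

/-- The `i`-th nonzero element of `H n` (for `i < r n - 1`): `e n i = ∑_{k ≤ i} (h n + s n k)`. -/
def e (S : RankOne) (n i : ℕ) : ℕ := ∑ k ∈ Finset.range (i + 1), (S.h n + S.s n k)

/-- `T` is steep: listing the nonzero elements of `H 0`, then `H 1`, etc., as `t 1, t 2, …`,
each successive element is at least `4` times the previous one. -/
def Steep (S : RankOne) : Prop :=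
  (∀ n i, i + 2 < S.r n → 4 * S.e n i ≤ S.e n (i + 1)) ∧
  (∀ n, 4 * S.e n (S.r n - 2) ≤ S.e (n + 1) 0)

/-- `T` is almost steep. -/
def AlmostSteep (S : RankOne) : Prop :=
  ∀ n, 3 ≤ S.r n ∧ S.s n 0 = 0 ∧ S.s n 1 = 1 ∧
    ∀ i, 2 ≤ i → i ≤ S.r n - 1 →
      4 * (∑ k ∈ Finset.range i, (S.h n + S.s n k)) ≤ ∑ k ∈ Finset.range (i + 1), (S.h n + S.s n k)

/-- `A` is a finite union of levels of `T`. -/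
def FinUnionLevels (S : RankOne) (A : Set ℝ) : Prop :=
  ∃ q : Finset (ℕ × ℕ), (∀ v ∈ q, v.2 < S.h v.1) ∧ A = ⋃ v ∈ q, S.lvl v.1 v.2

end RankOne

namespace RankOne

/-- Partial sums of heights: the height of the bottom of the `k`-th subcolumn. -/
def EE (S : RankOne) (m k : ℕ) : ℕ := ∑ i ∈ Finset.range k, (S.h m + S.s m i)

/-- Heights of the descendants of the unit interval in column `m`. -/
def DD (S : RankOne) : ℕ → Finset ℕ
  | 0 => {0}
  | m + 1 => (DD S m ×ˢ Finset.range (S.r m)).image fun v => S.EE m v.2 + v.1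

/-- An upper bound for the elements of `DD S m`. -/
def MM (S : RankOne) : ℕ → ℕ
  | 0 => 0
  | m + 1 => MM S m + S.EE m (S.r m - 1)

/-- The product of the numbers of cuts. -/
def WW (S : RankOne) : ℕ → ℕ
  | 0 => 1
  | m + 1 => WW S m * S.r m

/-- Return heights. -/
def PP (S : RankOne) (n m : ℕ) : Finset ℕ := (S.DD m).filter fun d => d + n ∈ S.DD m

theorem EE_mono (S : RankOne) (m : ℕ) : Monotone (S.EE m) := by
  intro a b hab
  unfold EE
  exact Finset.sum_le_sum_of_subset (Finset.range_mono hab)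

theorem h_pos (S : RankOne) (m : ℕ) : 0 < S.h m := by
  induction m with
  | zero => rw [S.h0]; norm_num
  | succ m ih =>
    rw [S.hrec]
    have h2 := S.hr m
    have : S.h m + S.s m 0 ≤ ∑ k ∈ Finset.range (S.r m), (S.h m + S.s m k) :=
      Finset.single_le_sum (f := fun k => S.h m + S.s m k) (fun _ _ => Nat.zero_le _)
        (Finset.mem_range.2 (by omega))
    omega

theorem EE_succ (S : RankOne) (m k : ℕ) : S.EE m (k + 1) = S.EE m k + (S.h m + S.s m k) := by
  unfold EE; rw [Finset.sum_range_succ]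

theorem EE_zero (S : RankOne) (m : ℕ) : S.EE m 0 = 0 := rfl

theorem EE_one_pos (S : RankOne) (m : ℕ) : 0 < S.EE m 1 := by
  rw [EE_succ, EE_zero]; have := S.h_pos m; omega

theorem hrec' (S : RankOne) (m : ℕ) :
    S.h (m + 1) = S.EE m (S.r m - 1) + (S.h m + S.s m (S.r m - 1)) := by
  rw [← EE_succ, S.hrec]
  have := S.hr m
  rw [show S.r m - 1 + 1 = S.r m by omega]; rfl

theorem DD_le (S : RankOne) (m : ℕ) : ∀ d ∈ S.DD m, d ≤ S.MM m := by
  induction m with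
  | zero => intro d hd; simp [DD] at hd; simp [hd]
  | succ m ih =>
    intro d hd
    simp only [DD, Finset.mem_image, Finset.mem_product, Finset.mem_range, Prod.exists] at hd
    obtain ⟨x, k, ⟨hx, hk⟩, rfl⟩ := hd
    have h1 := ih x hx
    have h2 : S.EE m k ≤ S.EE m (S.r m - 1) := S.EE_mono m (by omega)
    simp only [MM]; omega

theorem DD_card (S : RankOne) (m : ℕ) : (S.DD m).card ≤ S.WW m := by
  induction m with
  | zero => simp [DD, WW]
  | succ m ih =>
    simp only [DD, WW]
    refine Finset.card_image_le.trans ?_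
    rw [Finset.card_product, Finset.card_range]
    exact Nat.mul_le_mul_right _ ih

theorem MM_lt (S : RankOne) (m : ℕ) : S.MM m < S.h m := by
  induction m with
  | zero => simp [MM, S.h0]
  | succ m ih => rw [S.hrec']; simp only [MM]; omega

theorem MM_gap (S : RankOne) (hnorm : S.Normal) (n : ℕ) : ∃ m0, ∀ m, m0 ≤ m → S.MM m + n < S.h m := by
  induction n with
  | zero => exact ⟨0, fun m _ => S.MM_lt m⟩
  | succ n ih =>
    obtain ⟨m0, h0⟩ := ih
    obtain ⟨m1, h1, hs⟩ := hnorm m0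
    refine ⟨m1 + 1, fun m hm => ?_⟩
    induction m, hm using Nat.le_induction with
    | base => have := h0 m1 h1; rw [S.hrec']; simp only [MM]; omega
    | succ m hm ih => rw [S.hrec']; simp only [MM]; omega

theorem MM_steep (S : RankOne) (hst : S.Steep) (m : ℕ) : 3 * S.MM m ≤ S.EE m 1 := by
  induction m with
  | zero => simp [MM]
  | succ m ih =>
    have h2 := hst.2 m
    have hr := S.hr m
    have h3 : S.e m (S.r m - 2) = S.EE m (S.r m - 1) := by
      unfold e EE; rw [show S.r m - 2 + 1 = S.r m - 1 by omega]
    have h4 : S.e (m + 1) 0 = S.EE (m + 1) 1 := rfl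
    have h5 : S.EE m 1 ≤ S.EE m (S.r m - 1) := S.EE_mono m (by omega)
    simp only [MM]; omega

theorem EE_steep (S : RankOne) (hst : S.Steep) (m i j : ℕ) (hij : i < j) (hj : j < S.r m) :
    4 * S.EE m i ≤ S.EE m j := by
  obtain ⟨j, rfl⟩ : ∃ j', j = j' + 1 := ⟨j - 1, by omega⟩
  rcases Nat.eq_zero_or_pos j with rfl | hjp
  · have : i = 0 := by omega
    subst this; simp [EE_zero]
  · obtain ⟨j, rfl⟩ : ∃ j', j = j' + 1 := ⟨j - 1, by omega⟩
    have h1 := hst.1 m j (by omega)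
    have h2 : S.EE m i ≤ S.EE m (j + 1) := S.EE_mono m (by omega)
    change 4 * S.EE m (j + 1) ≤ S.EE m (j + 1 + 1) at h1
    omega

theorem EE_tri (S : RankOne) (hst : S.Steep) (m i j : ℕ) (hi : i < S.r m) (hj : j < S.r m) :
    S.EE m i = S.EE m j ∨ 4 * S.EE m i ≤ S.EE m j ∨ 4 * S.EE m j ≤ S.EE m i := by
  rcases lt_trichotomy i j with h | h | h
  · exact Or.inr (Or.inl (S.EE_steep hst m i j h hj))
  · subst h; exact Or.inl rfl
  · exact Or.inr (Or.inr (S.EE_steep hst m j i h hi))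

theorem EE_big (S : RankOne) (m i : ℕ) : S.EE m i = 0 ∨ S.EE m 1 ≤ S.EE m i := by
  rcases Nat.eq_zero_or_pos i with h | h
  · subst h; exact Or.inl rfl
  · exact Or.inr (S.EE_mono m h)

theorem sep_aux (e M a b a' b' x y x' y' n : ℕ) (he : 0 < e) (hM : 3 * M ≤ e)
    (ha : a = 0 ∨ e ≤ a) (hb : b = 0 ∨ e ≤ b) (ha' : a' = 0 ∨ e ≤ a') (hb' : b' = 0 ∨ e ≤ b')
    (h1 : a = b ∨ 4 * a ≤ b ∨ 4 * b ≤ a) (h2 : a = a' ∨ 4 * a ≤ a' ∨ 4 * a' ≤ a)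
    (h5 : b' = b ∨ 4 * b' ≤ b ∨ 4 * b ≤ b') (h6 : b' = a' ∨ 4 * b' ≤ a' ∨ 4 * a' ≤ b')
    (hx : x ≤ M) (hy : y ≤ M) (hx' : x' ≤ M) (hy' : y' ≤ M)
    (e1 : b + x + n = a + y) (e2 : b' + x' + n = a' + y') :
    (a = b ∧ a' = b') ∨ (a = a' ∧ b = b') := by
  have k1 : a + b' ≤ a' + b + 2 * M := by omega
  have k2 : a' + b ≤ a + b' + 2 * M := by omega
  clear e1 e2 hx hy hx' hy'
  rcases h1 with h1 | h1 | h1 <;> rcases h2 with h2 | h2 | h2 <;>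
    rcases h5 with h5 | h5 | h5 <;> rcases h6 with h6 | h6 | h6 <;> omega

theorem PP_bound (S : RankOne) (hst : S.Steep) (hmono : Monotone S.r) (n J : ℕ) (hn : S.MM J < n)
    (m : ℕ) (hm : J ≤ m) : (S.PP n m).card * S.r J ≤ S.WW m := by
  induction m, hm using Nat.le_induction with
  | base =>
    have : S.PP n J = ∅ := by
      unfold PP
      rw [Finset.filter_eq_empty_iff]
      intro d hd hdn
      have := S.DD_le J _ hdn
      omega
    simp [this]
  | succ m hm ih =>
    have key : ∀ d ∈ S.PP n (m + 1), ∃ x y i j, x ∈ S.DD m ∧ y ∈ S.DD m ∧ i < S.r m ∧ j < S.r m ∧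
        d = S.EE m i + x ∧ d + n = S.EE m j + y := by
      intro d hd
      unfold PP at hd
      rw [Finset.mem_filter] at hd
      simp only [DD, Finset.mem_image, Finset.mem_product,
        Finset.mem_range, Prod.exists] at hd
      obtain ⟨⟨x, i, ⟨hx, hi⟩, h1⟩, ⟨y, j, ⟨hy, hj⟩, h2⟩⟩ := hd
      exact ⟨x, y, i, j, hx, hy, hi, hj, h1.symm, h2.symm⟩
    by_cases hall : ∀ x y i j, x ∈ S.DD m → y ∈ S.DD m → i < S.r m → j < S.r m →
        S.EE m i + x + n = S.EE m j + y → S.EE m j = S.EE m i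
    · have hsub : S.PP n (m + 1) ⊆
          (S.PP n m ×ˢ Finset.range (S.r m)).image fun v => S.EE m v.2 + v.1 := by
        intro d hd
        obtain ⟨x, y, i, j, hx, hy, hi, hj, h1, h2⟩ := key d hd
        have := hall x y i j hx hy hi hj (by omega)
        simp only [PP, Finset.mem_filter, Finset.mem_image, Finset.mem_product,
          Finset.mem_range, Prod.exists]
        refine ⟨x, i, ⟨⟨hx, ?_⟩, hi⟩, h1.symm⟩
        have : x + n = y := by omega
        rwa [this]
      have hc : (S.PP n (m + 1)).card ≤ (S.PP n m).card * S.r m := by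
        refine (Finset.card_le_card hsub).trans (Finset.card_image_le.trans ?_)
        rw [Finset.card_product, Finset.card_range]
      calc (S.PP n (m + 1)).card * S.r J ≤ (S.PP n m).card * S.r m * S.r J :=
            Nat.mul_le_mul_right _ hc
        _ = (S.PP n m).card * S.r J * S.r m := by ring
        _ ≤ S.WW m * S.r m := Nat.mul_le_mul_right _ ih
    · push Not at hall
      obtain ⟨x, y, i, j, hx, hy, hi, hj, h1, hne⟩ := hall
      have hsub : S.PP n (m + 1) ⊆ (S.DD m).image fun v => S.EE m i + v := by
        intro d hd
        obtain ⟨x', y', i', j', hx', hy', hi', hj', h1', h2'⟩ := key d hd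
        have := sep_aux (S.EE m 1) (S.MM m) (S.EE m j) (S.EE m i) (S.EE m j') (S.EE m i')
          x y x' y' n (S.EE_one_pos m) (S.MM_steep hst m) (S.EE_big m _) (S.EE_big m _)
          (S.EE_big m _) (S.EE_big m _) (S.EE_tri hst m _ _ hj hi) (S.EE_tri hst m _ _ hj hj')
          (S.EE_tri hst m _ _ hi' hi) (S.EE_tri hst m _ _ hi' hj') (S.DD_le m _ hx)
          (S.DD_le m _ hy) (S.DD_le m _ hx') (S.DD_le m _ hy') h1 (by omega)
        rcases this with h | h
        · exact absurd h.1 hne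
        · rw [Finset.mem_image]
          exact ⟨x', hx', by omega⟩
      have hc : (S.PP n (m + 1)).card ≤ S.WW m :=
        (Finset.card_le_card hsub).trans (Finset.card_image_le.trans (S.DD_card m))
      exact Nat.mul_le_mul hc (hmono hm)

theorem WW_pos (S : RankOne) (m : ℕ) : 0 < S.WW m := by
  induction m with
  | zero => simp [WW]
  | succ m ih => have := S.hr m; simp only [WW]; positivity

theorem w_eq (S : RankOne) (m : ℕ) : S.w m = 1 / (S.WW m : ℝ) := by
  induction m with
  | zero => simp [WW, S.w0]
  | succ m ih => rw [S.wrec, ih]; simp only [WW]; push_cast; rw [div_div]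

theorem w_pos (S : RankOne) (m : ℕ) : 0 < S.w m := by
  rw [w_eq]; have := S.WW_pos m; positivity

theorem w_le (S : RankOne) (m : ℕ) : S.w m ≤ 1 := by
  rw [w_eq]
  have : (1 : ℝ) ≤ S.WW m := by exact_mod_cast S.WW_pos m
  exact div_le_one_of_le₀ this (by positivity)

theorem pos_zero (S : RankOne) (m : ℕ) : S.pos m 0 = 0 := by
  induction m with
  | zero => exact S.pos0
  | succ m ih =>
    have := S.stack m 0 (S.h_pos m) 0 (by have := S.hr m; omega)
    simpa [ih] using this

theorem T_iter (S : RankOne) (m i j : ℕ) (hij : i + j < S.h m) (x : ℝ) (hx : x ∈ S.lvl m i) :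
    (⇑S.T)^[j] x = x + (S.pos m (i + j) - S.pos m i) ∧ (⇑S.T)^[j] x ∈ S.lvl m (i + j) := by
  induction j with
  | zero => simpa using hx
  | succ j ih =>
    obtain ⟨h1, h2⟩ := ih (by omega)
    rw [Function.iterate_succ_apply', S.Tmap m (i + j) (by omega) _ h2]
    refine ⟨by rw [h1]; ring_nf, ?_⟩
    simp only [lvl, Set.mem_Ioo] at h2 ⊢
    rw [← add_assoc]
    constructor <;> linarith [h2.1, h2.2]

theorem X_cover (S : RankOne) : S.X ⊆ ⋃ p : ℕ, (⇑S.T)^[p] '' S.lvl 0 0 := by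
  intro x hx
  rw [S.hX] at hx
  simp only [Set.mem_iUnion] at hx
  obtain ⟨m, j, hj, hx⟩ := hx
  rw [Set.mem_iUnion]
  have hx0 : x - S.pos m j ∈ S.lvl m 0 := by
    simp only [lvl, Set.mem_Ioo, pos_zero] at hx ⊢
    constructor <;> linarith [hx.1, hx.2]
  refine ⟨j, x - S.pos m j, ?_, ?_⟩
  · have := S.w_le m
    simp only [lvl, Set.mem_Ioo, pos_zero, S.w0] at hx0 ⊢
    constructor <;> linarith [hx0.1, hx0.2]
  · have := (S.T_iter m 0 j (by omega) _ hx0).1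
    rw [this, pos_zero]; simp

theorem cut_null (p w : ℝ) (r : ℕ) (hr : 0 < r) (hw : 0 < w) :
    Set.Ioo p (p + w) ⊆ (⋃ k < r, Set.Ioo (p + (k : ℝ) * (w / r)) (p + (k : ℝ) * (w / r) + w / r)) ∪
      Set.range (fun k : ℕ => p + (k : ℝ) * (w / r)) := by
  intro x hx
  have hr' : (0 : ℝ) < r := by exact_mod_cast hr
  have hv : 0 < w / r := by positivity
  have hw' : (r : ℝ) * (w / r) = w := by field_simp
  set v := w / r with hvdef
  have hq : 0 ≤ (x - p) / v := div_nonneg (by linarith [hx.1]) hv.le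
  have f1 := Nat.floor_le hq
  have f2 := Nat.lt_floor_add_one ((x - p) / v)
  set k := ⌊(x - p) / v⌋₊ with hk
  rw [le_div_iff₀ hv] at f1
  rw [div_lt_iff₀ hv] at f2
  have hkr : k < r := by
    have : (k : ℝ) * v < r * v := by linarith [hx.2]
    exact_mod_cast lt_of_mul_lt_mul_right this hv.le
  rcases f1.lt_or_eq with h | h
  · left
    simp only [Set.mem_iUnion]
    exact ⟨k, hkr, by constructor <;> linarith⟩
  · right
    exact ⟨k, by simp only; linarith⟩

theorem I_null (S : RankOne) (m : ℕ) :
    (S.lvl 0 0 \ ⋃ d ∈ S.DD m, S.lvl m d).Countable := by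
  induction m with
  | zero => simp [DD]
  | succ m ih =>
    have h2 : (⋃ d ∈ S.DD m, Set.range
        (fun k : ℕ => S.pos m d + (k : ℝ) * (S.w m / S.r m))).Countable :=
      (S.DD m).countable_toSet.biUnion fun d _ => Set.countable_range _
    refine (ih.union h2).mono ?_
    rintro x ⟨hx, hx'⟩
    by_cases hxm : x ∈ ⋃ d ∈ S.DD m, S.lvl m d
    · right
      simp only [Set.mem_iUnion] at hxm ⊢
      obtain ⟨d, hd, hxd⟩ := hxm
      refine ⟨d, hd, ?_⟩
      rcases cut_null (S.pos m d) (S.w m) (S.r m) (by have := S.hr m; omega) (S.w_pos m) hxd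
        with h | h
      · exfalso
        apply hx'
        simp only [Set.mem_iUnion] at h ⊢
        obtain ⟨k, hk, h⟩ := h
        refine ⟨S.EE m k + d, ?_, ?_⟩
        · simp only [DD, Finset.mem_image, Finset.mem_product, Finset.mem_range, Prod.exists]
          exact ⟨d, k, ⟨hd, hk⟩, rfl⟩
        · have hs := S.stack m d ((S.DD_le m d hd).trans_lt (S.MM_lt m)) k hk
          unfold lvl EE
          rw [hs, S.wrec]
          exact h
      · exact h
    · left; exact ⟨hx, hxm⟩

theorem mu_image (S : RankOne) (A : Set ℝ) : S.μ (⇑S.T '' A) = S.μ A := by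
  have h : MeasurePreserving (⇑S.T.symm) S.μ S.μ := MeasurePreserving.symm S.T S.Tpres
  rw [S.T.image_eq_preimage_symm]
  exact h.measure_preimage_equiv A

theorem mu_iter (S : RankOne) (n : ℕ) (A : Set ℝ) : S.μ ((⇑S.T)^[n] '' A) = S.μ A := by
  induction n with
  | zero => simp
  | succ n ih => rw [Function.iterate_succ', Set.image_comp, mu_image, ih]

theorem I_bound (S : RankOne) (hnorm : S.Normal) (hst : S.Steep) (hmono : Monotone S.r) (n J : ℕ)
    (hn : S.MM J < n) : S.μ (S.lvl 0 0 ∩ (⇑S.T)^[n] '' S.lvl 0 0) ≤ (S.r J : ENNReal)⁻¹ := by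
  obtain ⟨m0, hm0⟩ := S.MM_gap hnorm n
  set m := max m0 J with hm
  have hgap := hm0 m (le_max_left _ _)
  have hcard := S.PP_bound hst hmono n J hn m (le_max_right _ _)
  set N := S.lvl 0 0 \ ⋃ d ∈ S.DD m, S.lvl m d with hN
  have hN0 : S.μ N = 0 := by
    have h1 : volume N = 0 := (S.I_null m).measure_zero _
    exact le_antisymm ((Measure.restrict_apply_le _ _).trans h1.le) bot_le
  have hsub : S.lvl 0 0 ∩ (⇑S.T)^[n] '' S.lvl 0 0 ⊆
      (N ∪ (⇑S.T)^[n] '' N) ∪ ⋃ d ∈ S.PP n m, S.lvl m (d + n) := by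
    rintro y ⟨hy, x, hx, rfl⟩
    by_cases hyN : (⇑S.T)^[n] x ∈ N
    · exact Or.inl (Or.inl hyN)
    by_cases hxN : x ∈ N
    · exact Or.inl (Or.inr ⟨x, hxN, rfl⟩)
    right
    have hy' : (⇑S.T)^[n] x ∈ ⋃ d ∈ S.DD m, S.lvl m d := by
      by_contra hc; exact hyN ⟨hy, hc⟩
    have hx' : x ∈ ⋃ d ∈ S.DD m, S.lvl m d := by
      by_contra hc; exact hxN ⟨hx, hc⟩
    simp only [Set.mem_iUnion] at hx' hy' ⊢
    obtain ⟨d, hd, hxd⟩ := hx'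
    obtain ⟨d', hd', hyd⟩ := hy'
    have hdM := S.DD_le m d hd
    have hdM' := S.DD_le m d' hd'
    have ht := (S.T_iter m d n (by omega) x hxd).2
    have hdd : d' = d + n := by
      by_contra hne
      exact Set.disjoint_left.1 (S.disj m d' (by omega) (d + n) (by omega) hne) hyd ht
    refine ⟨d, ?_, ht⟩
    simp only [PP, Finset.mem_filter]
    exact ⟨hd, hdd ▸ hd'⟩
  have hlvl : ∀ d, S.μ (S.lvl m d) ≤ (S.WW m : ENNReal)⁻¹ := by
    intro d
    refine (Measure.restrict_apply_le _ _).trans ?_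
    unfold lvl
    rw [Real.volume_Ioo, add_sub_cancel_left, w_eq, one_div,
      ENNReal.ofReal_inv_of_pos (by exact_mod_cast S.WW_pos m), ENNReal.ofReal_natCast]
  have hW0 : (S.WW m : ENNReal) ≠ 0 := by have := S.WW_pos m; exact_mod_cast this.ne'
  have hr0 : (S.r J : ENNReal) ≠ 0 := by have := S.hr J; exact_mod_cast (by omega : S.r J ≠ 0)
  calc S.μ (S.lvl 0 0 ∩ (⇑S.T)^[n] '' S.lvl 0 0)
      ≤ S.μ ((N ∪ (⇑S.T)^[n] '' N) ∪ ⋃ d ∈ S.PP n m, S.lvl m (d + n)) := measure_mono hsub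
    _ ≤ (S.μ N + S.μ ((⇑S.T)^[n] '' N)) + S.μ (⋃ d ∈ S.PP n m, S.lvl m (d + n)) :=
        (measure_union_le _ _).trans (add_le_add (measure_union_le _ _) le_rfl)
    _ = S.μ (⋃ d ∈ S.PP n m, S.lvl m (d + n)) := by rw [mu_iter, hN0]; simp
    _ ≤ ∑ d ∈ S.PP n m, S.μ (S.lvl m (d + n)) := measure_biUnion_finset_le _ _
    _ ≤ ∑ d ∈ S.PP n m, (S.WW m : ENNReal)⁻¹ := Finset.sum_le_sum fun d _ => hlvl _
    _ = (S.PP n m).card * (S.WW m : ENNReal)⁻¹ := by rw [Finset.sum_const, nsmul_eq_mul]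
    _ ≤ (S.r J : ENNReal)⁻¹ := by
        rw [← div_eq_mul_inv, ENNReal.div_le_iff hW0 (ENNReal.natCast_ne_top _), mul_comm,
          ← div_eq_mul_inv, ENNReal.le_div_iff_mul_le (Or.inl hr0)
            (Or.inl (ENNReal.natCast_ne_top _))]
        exact_mod_cast hcard

theorem I_tendsto (S : RankOne) (hnorm : S.Normal) (hst : S.Steep) (hmono : Monotone S.r)
    (hunbdd : ∀ c, ∃ n, c < S.r n) :
    Tendsto (fun n => S.μ (S.lvl 0 0 ∩ (⇑S.T)^[n] '' S.lvl 0 0)) atTop (nhds 0) := by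
  rw [ENNReal.tendsto_nhds_zero]
  intro ε hε
  obtain ⟨c, hc⟩ := ENNReal.exists_inv_nat_lt hε.ne'
  obtain ⟨J, hJ⟩ := hunbdd c
  filter_upwards [eventually_gt_atTop (S.MM J)] with n hn
  refine (S.I_bound hnorm hst hmono n J hn).trans (le_trans ?_ hc.le)
  exact ENNReal.inv_le_inv.2 (by exact_mod_cast hJ.le)

theorem T_iter_measurable (S : RankOne) (n : ℕ) (A : Set ℝ) (hA : MeasurableSet A) :
    MeasurableSet ((⇑S.T)^[n] '' A) := by
  induction n with
  | zero => simpa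
  | succ n ih =>
    rw [Function.iterate_succ', Set.image_comp]
    exact S.T.measurableSet_image.2 ih

theorem I_pq (S : RankOne) (n p q : ℕ) (hpn : p ≤ n) :
    S.μ ((⇑S.T)^[p] '' S.lvl 0 0 ∩ (⇑S.T)^[n] '' ((⇑S.T)^[q] '' S.lvl 0 0)) =
      S.μ (S.lvl 0 0 ∩ (⇑S.T)^[n - p + q] '' S.lvl 0 0) := by
  rw [← S.mu_iter p (S.lvl 0 0 ∩ _), Set.image_inter (S.T.injective.iterate p), ← Set.image_comp,
    ← Set.image_comp, ← Function.iterate_add, ← Function.iterate_add]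
  rw [show p + (n - p + q) = n + q by omega]

end RankOne

/-- A normal, steep rank-one transformation whose sequence of cuts `(r n)`
is nondecreasing and unbounded is zero-type. -/
theorem statement16 (S : RankOne) (hnorm : S.Normal) (hsteep : S.Steep)
    (hmono : Monotone S.r) (hunbdd : ∀ c, ∃ n, c < S.r n) :
    S.ZeroType := by
  have hI := S.I_tendsto hnorm hsteep hmono hunbdd
  intro A hA hAfin
  set U : ℕ → Set ℝ := fun P => ⋃ p ∈ Finset.range P, (⇑S.T)^[p] '' S.lvl 0 0 with hU
  have hUm : ∀ P, MeasurableSet (U P) := fun P =>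
    Finset.measurableSet_biUnion _ fun p _ => S.T_iter_measurable p _ measurableSet_Ioo
  have hXm : MeasurableSet S.X := by
    rw [S.hX]
    exact MeasurableSet.iUnion fun n => MeasurableSet.iUnion fun j =>
      MeasurableSet.iUnion fun _ => measurableSet_Ioo
  have hB : Tendsto (fun P => S.μ (A \ U P)) atTop (nhds 0) := by
    have h1 : Tendsto (fun P => S.μ (A \ U P)) atTop (nhds (S.μ (⋂ P, A \ U P))) := by
      apply tendsto_measure_iInter_atTop
      · exact fun P => (hA.diff (hUm P)).nullMeasurableSet
      · intro P Q hPQ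
        exact Set.sdiff_subset_sdiff_right
          (Set.biUnion_subset_biUnion_left (fun p hp => Finset.range_mono hPQ hp))
      · exact ⟨0, ((measure_mono Set.sdiff_subset).trans_lt (lt_top_iff_ne_top.2 hAfin)).ne⟩
    have h2 : S.μ (⋂ P, A \ U P) = 0 := by
      have hs : (⋂ P, A \ U P) ⊆ S.Xᶜ := by
        intro x hx hxX
        obtain ⟨p, hp⟩ := Set.mem_iUnion.1 (S.X_cover hxX)
        refine (Set.mem_iInter.1 hx (p + 1)).2 ?_
        exact Set.mem_biUnion (Finset.mem_coe.2 (Finset.self_mem_range_succ p)) hp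
      refine measure_mono_null hs ?_
      unfold RankOne.μ
      rw [Measure.restrict_apply hXm.compl]; simp
    rwa [h2] at h1
  rw [ENNReal.tendsto_nhds_zero]
  intro ε hε
  have hε3 : 0 < ε / 3 := ENNReal.div_pos hε.ne' (by norm_num)
  obtain ⟨P, hP⟩ := (ENNReal.tendsto_nhds_zero.1 hB (ε / 3) hε3).exists
  have hsum : Tendsto (fun n => ∑ p ∈ Finset.range P, ∑ q ∈ Finset.range P,
      S.μ (S.lvl 0 0 ∩ (⇑S.T)^[n - p + q] '' S.lvl 0 0)) atTop (nhds 0) := by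
    rw [show (0 : ENNReal) = ∑ p ∈ Finset.range P, ∑ q ∈ Finset.range P, 0 by simp]
    refine tendsto_finsetSum _ fun p _ => tendsto_finsetSum _ fun q _ => ?_
    exact hI.comp (tendsto_atTop_mono (fun n => Nat.le_add_right (n - p) q) (tendsto_sub_atTop_nat p))
  filter_upwards [ENNReal.tendsto_nhds_zero.1 hsum (ε / 3) hε3, eventually_ge_atTop P] with n h1 h2
  have hsub : A ∩ (⇑S.T)^[n] '' A ⊆ ((A \ U P) ∪ (⇑S.T)^[n] '' (A \ U P)) ∪
      ⋃ p ∈ Finset.range P, ⋃ q ∈ Finset.range P,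
        ((⇑S.T)^[p] '' S.lvl 0 0 ∩ (⇑S.T)^[n] '' ((⇑S.T)^[q] '' S.lvl 0 0)) := by
    rintro y ⟨hy, x, hx, rfl⟩
    by_cases hyU : (⇑S.T)^[n] x ∈ U P
    · by_cases hxU : x ∈ U P
      · right
        simp only [hU, Set.mem_iUnion] at hyU hxU ⊢
        obtain ⟨p, hp, hyp⟩ := hyU
        obtain ⟨q, hq, hxq⟩ := hxU
        exact ⟨p, hp, q, hq, hyp, x, hxq, rfl⟩
      · exact Or.inl (Or.inr ⟨x, ⟨hx, hxU⟩, rfl⟩)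
    · exact Or.inl (Or.inl ⟨hy, hyU⟩)
  calc S.μ (A ∩ (⇑S.T)^[n] '' A) ≤ _ := measure_mono hsub
    _ ≤ (S.μ (A \ U P) + S.μ ((⇑S.T)^[n] '' (A \ U P))) + S.μ (⋃ p ∈ Finset.range P,
        ⋃ q ∈ Finset.range P,
        ((⇑S.T)^[p] '' S.lvl 0 0 ∩ (⇑S.T)^[n] '' ((⇑S.T)^[q] '' S.lvl 0 0))) :=
        (measure_union_le _ _).trans (add_le_add (measure_union_le _ _) le_rfl)
    _ ≤ (ε / 3 + ε / 3) + ε / 3 := by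
        refine add_le_add (add_le_add hP ((S.mu_iter n _).le.trans hP)) (le_trans ?_ h1)
        refine (measure_biUnion_finset_le _ _).trans (Finset.sum_le_sum fun p hp => ?_)
        refine (measure_biUnion_finset_le _ _).trans (Finset.sum_le_sum fun q _ => ?_)
        exact (S.I_pq n p q ((Finset.mem_range.1 hp).le.trans h2)).le
    _ = ε := ENNReal.add_thirds ε
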